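/- For all reals a < b, T > 0, λ > 0, β > 1, C₀ > 0, ε₀ ≥ 0, E₀ ≥ 0, D₀ ≥ 0, m₀ ≥ 0 and M ≥ 0 there exists a constant C > 0 with the following property: for every ε ∈ [0,ε₀] and every classical solution (y,u) of the regularized thin-film equation with control u on [0,T] × [a,b], for which in addition the mixed derivatives ∂ₜ∂ₓy and ∂ₜ∂ₓ²y exist, are continuous on [0,T] × [a,b], and equal the corresponding derivatives taken in the reversed order, and which satisfies y(t,x) ≥ C₀ on [0,T] × [a,b], (1/2)∫ₐᵇ (∂ₓy(0,x))² dx ≤ E₀, ∫ₐᵇ (∂ₓ²y(0,x))² dx ≤ D₀², ∫ₐᵇ y(0,x) dx ≤ m₀, and ∫₀ᵀ∫ₐᵇ (∂ₓu(s,x))² dx ds ≤ M², one has sup_{t∈[0,T]} ∫ₐᵇ (∂ₓ²y(t,x))² dx + (λC₀^β + ε)·∫₀ᵀ∫ₐᵇ (∂ₓ⁴y(s,x))² dx ds ≤ C·(∫₀ᵀ∫ₐᵇ (∂ₓu(s,x))² dx ds + 1). -/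

import Mathlib

/-!
The estimate comes from two tested forms of the equation, with `μ = λ C₀^β ≤ λ y^β + ε`.

Testing with `-∂ₓ²y` gives the energy law
`d/dt ∫ (∂ₓy)² = -2 ∫ (λ y^β + ε) (∂ₓ³y)² + 2 ∫ u ∂ₓ³y`; since `u` vanishes at `a`, Young and
Poincaré bound the right side by `-μ ∫ (∂ₓ³y)² + (b - a)² / μ ∫ (∂ₓu)²`. Hence `∂ₓy` is bounded in
`L^∞(L²)` and `∂ₓ³y` in `L²(L²)` (`energy_estimate`). Together with conservation of mass
(`mass_le`) this yields a height bound `y ≤ K` (`height_le`), hence a bound `N` on the derivative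
`λ β y^(β - 1)` of the mobility.

Testing with `∂ₓ⁴y` gives `d/dt ∫ (∂ₓ²y)² = 2 ∫ ∂ₓ⁴y ∂ₜy`, where
`∂ₜy = ∂ₓu - (λ y^β + ε) ∂ₓ⁴y - λ β y^(β - 1) ∂ₓy ∂ₓ³y`. The cubic term is handled by
`(∂ₓy)² ≤ (b - a) ∫ (∂ₓ²y)²`, so that with `F = ∫ (∂ₓ²y)²`
`F' + (μ + ε) ∫ (∂ₓ⁴y)² ≤ (2 N² (b - a) / μ) (∫ (∂ₓ³y)²) F + (2 / μ) ∫ (∂ₓu)²`.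
The Grönwall rate is integrable in time by the energy estimate, and `gronwall_integral` concludes
(`curvature_estimate`).
-/

open Set

/-- A classical solution of the regularized thin-film equation
`∂ₜ y = −∂ₓ[(λ|y|^β + ε)·∂ₓ³y] + ∂ₓ u` on `[0,T] × [a,b]`, with the boundary
conditions `∂ₓy = ∂ₓ³y = 0` and `u = 0` at `x = a, b`.  The functions
`yx, yxx, yxxx, yxxxx` are the successive spatial derivatives of `y`, `yt` is
its time derivative, and `ux` is the spatial derivative of the control `u`;
all of them are continuous on `[0,T] × [a,b]`. -/
structure IsClassicalSolution (a b T lam ε β : ℝ)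
    (y yx yxx yxxx yxxxx yt u ux : ℝ → ℝ → ℝ) : Prop where
  cont_y : ContinuousOn (fun p : ℝ × ℝ => y p.1 p.2) (Icc 0 T ×ˢ Icc a b)
  cont_yx : ContinuousOn (fun p : ℝ × ℝ => yx p.1 p.2) (Icc 0 T ×ˢ Icc a b)
  cont_yxx : ContinuousOn (fun p : ℝ × ℝ => yxx p.1 p.2) (Icc 0 T ×ˢ Icc a b)
  cont_yxxx : ContinuousOn (fun p : ℝ × ℝ => yxxx p.1 p.2) (Icc 0 T ×ˢ Icc a b)
  cont_yxxxx : ContinuousOn (fun p : ℝ × ℝ => yxxxx p.1 p.2) (Icc 0 T ×ˢ Icc a b)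
  cont_yt : ContinuousOn (fun p : ℝ × ℝ => yt p.1 p.2) (Icc 0 T ×ˢ Icc a b)
  cont_u : ContinuousOn (fun p : ℝ × ℝ => u p.1 p.2) (Icc 0 T ×ˢ Icc a b)
  cont_ux : ContinuousOn (fun p : ℝ × ℝ => ux p.1 p.2) (Icc 0 T ×ˢ Icc a b)
  hyx : ∀ t ∈ Icc 0 T, ∀ x ∈ Icc a b, HasDerivAt (fun ξ => y t ξ) (yx t x) x
  hyxx : ∀ t ∈ Icc 0 T, ∀ x ∈ Icc a b, HasDerivAt (fun ξ => yx t ξ) (yxx t x) x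
  hyxxx : ∀ t ∈ Icc 0 T, ∀ x ∈ Icc a b, HasDerivAt (fun ξ => yxx t ξ) (yxxx t x) x
  hyxxxx : ∀ t ∈ Icc 0 T, ∀ x ∈ Icc a b, HasDerivAt (fun ξ => yxxx t ξ) (yxxxx t x) x
  hyt : ∀ t ∈ Icc 0 T, ∀ x ∈ Icc a b, HasDerivAt (fun s => y s x) (yt t x) t
  hux : ∀ t ∈ Icc 0 T, ∀ x ∈ Icc a b, HasDerivAt (fun ξ => u t ξ) (ux t x) x
  pde : ∀ t ∈ Icc 0 T, ∀ x ∈ Icc a b,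
    HasDerivAt (fun ξ => (lam * |y t ξ| ^ β + ε) * yxxx t ξ) (ux t x - yt t x) x
  bc_yx_a : ∀ t ∈ Icc 0 T, yx t a = 0
  bc_yx_b : ∀ t ∈ Icc 0 T, yx t b = 0
  bc_yxxx_a : ∀ t ∈ Icc 0 T, yxxx t a = 0
  bc_yxxx_b : ∀ t ∈ Icc 0 T, yxxx t b = 0
  bc_u_a : ∀ t ∈ Icc 0 T, u t a = 0
  bc_u_b : ∀ t ∈ Icc 0 T, u t b = 0


/-! ### Parameter integrals, Grönwall and Poincaré -/

open MeasureTheory intervalIntegral in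
theorem continuousOn_integral_param {T a b : ℝ} (hT : 0 < T) (hab : a < b) {f : ℝ → ℝ → ℝ}
    (hf : ContinuousOn (fun p : ℝ × ℝ => f p.1 p.2) (Icc 0 T ×ˢ Icc a b)) :
    ContinuousOn (fun t => ∫ x in a..b, f t x) (Icc 0 T) := by
  have hc : Continuous (fun p : ℝ × ℝ =>
      f (projIcc 0 T hT.le p.1 : ℝ) (projIcc a b hab.le p.2 : ℝ)) := by
    refine hf.comp_continuous (f := fun p : ℝ × ℝ =>
      ((projIcc 0 T hT.le p.1 : ℝ), (projIcc a b hab.le p.2 : ℝ))) ?_ ?_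
    · exact ((continuous_subtype_val.comp continuous_projIcc).comp continuous_fst).prodMk
        ((continuous_subtype_val.comp continuous_projIcc).comp continuous_snd)
    · exact fun p => ⟨Subtype.prop _, Subtype.prop _⟩
  have h2 := continuous_parametric_intervalIntegral_of_continuous' (μ := volume)
    (f := fun t x => f (projIcc 0 T hT.le t : ℝ) (projIcc a b hab.le x : ℝ)) hc a b
  refine h2.continuousOn.congr fun t ht => ?_
  refine integral_congr fun x hx => ?_
  rw [uIcc_of_le hab.le] at hx
  simp [projIcc_of_mem _ ht, projIcc_of_mem _ hx]

theorem continuousOn_slice {T a b t : ℝ} {f : ℝ → ℝ → ℝ}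
    (hf : ContinuousOn (fun p : ℝ × ℝ => f p.1 p.2) (Icc 0 T ×ˢ Icc a b)) (ht : t ∈ Icc 0 T) :
    ContinuousOn (f t) (Icc a b) :=
  hf.comp (f := fun x => (t, x)) (by fun_prop) fun _ hx => ⟨ht, hx⟩

open MeasureTheory intervalIntegral in
/-- Leibniz rule on a rectangle: differentiation under `∫ₐᵇ` at interior times. -/
theorem hasDerivAt_integral_param {T a b : ℝ} (hab : a < b) {f ft : ℝ → ℝ → ℝ}
    (hf : ContinuousOn (fun p : ℝ × ℝ => f p.1 p.2) (Icc 0 T ×ˢ Icc a b))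
    (hft : ContinuousOn (fun p : ℝ × ℝ => ft p.1 p.2) (Icc 0 T ×ˢ Icc a b))
    (hd : ∀ t ∈ Icc 0 T, ∀ x ∈ Icc a b, HasDerivAt (fun s => f s x) (ft t x) t)
    {t : ℝ} (ht : t ∈ Ioo 0 T) :
    HasDerivAt (fun t => ∫ x in a..b, f t x) (∫ x in a..b, ft t x) t := by
  obtain ⟨K, hK⟩ := (isCompact_Icc.prod isCompact_Icc).exists_bound_of_continuousOn hft
  have hi : ∀ g : ℝ → ℝ, ContinuousOn g (Icc a b) → IntervalIntegrable g volume a b :=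
    fun g hg => hg.intervalIntegrable_of_Icc hab.le
  have hmem : ∀ x, x ∈ uIoc a b → x ∈ Icc a b := fun x hx => by
    rw [uIoc_of_le hab.le] at hx; exact Ioc_subset_Icc_self hx
  refine (hasDerivAt_integral_of_dominated_loc_of_deriv_le (μ := volume) (bound := fun _ => K)
    (Ioo_mem_nhds ht.1 ht.2) ?_ (hi _ (continuousOn_slice hf (Ioo_subset_Icc_self ht)))
    (hi _ (continuousOn_slice hft (Ioo_subset_Icc_self ht))).aestronglyMeasurable_restrict_uIoc
    ?_ (by simp) ?_).2
  · filter_upwards [Ioo_mem_nhds ht.1 ht.2] with s hs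
    exact (hi _ (continuousOn_slice hf (Ioo_subset_Icc_self hs))).aestronglyMeasurable_restrict_uIoc
  · exact Filter.Eventually.of_forall fun x hx s hs =>
      hK (s, x) ⟨Ioo_subset_Icc_self hs, hmem x hx⟩
  · exact Filter.Eventually.of_forall fun x hx s hs =>
      hd s (Ioo_subset_Icc_self hs) x (hmem x hx)

open MeasureTheory intervalIntegral in
theorem primitive_facts {T : ℝ} (hT : 0 < T) {g : ℝ → ℝ} (hg : ContinuousOn g (Icc 0 T)) :
    ContinuousOn (fun t => ∫ s in (0 : ℝ)..t, g s) (Icc 0 T) ∧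
    ∀ t ∈ Ioo 0 T, HasDerivAt (fun t => ∫ s in (0 : ℝ)..t, g s) (g t) t := by
  constructor
  · have := continuousOn_primitive_interval (μ := volume) (f := g) (a := 0) (b := T)
      (by rw [uIcc_of_le hT.le]; exact hg.integrableOn_Icc)
    rwa [uIcc_of_le hT.le] at this
  · intro t ht
    have hn : Icc 0 T ∈ nhds t := Icc_mem_nhds ht.1 ht.2
    refine integral_hasDerivAt_right
      ((hg.mono (Icc_subset_Icc_right ht.2.le)).intervalIntegrable_of_Icc ht.1.le) ?_
      (hg.continuousAt hn)
    exact ⟨_, hn, hg.aestronglyMeasurable measurableSet_Icc⟩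

open MeasureTheory intervalIntegral in
/-- Grönwall's inequality with a time-dependent rate `g` and a dissipation term `k`: if
`F' ≤ g F + r - k` with `g, r, k, F 0 ≥ 0`, then `F t + ∫₀ᵗ k ≤ exp (∫₀ᵀ g) (F 0 + ∫₀ᵀ r)`.
The quantity `(F + ∫₀ᵗ k) exp (-∫₀ᵗ g) - ∫₀ᵗ r` is nonincreasing. -/
theorem gronwall_integral {T : ℝ} (hT : 0 < T) {F F' g r k : ℝ → ℝ}
    (hF : ContinuousOn F (Icc 0 T)) (hg : ContinuousOn g (Icc 0 T))
    (hr : ContinuousOn r (Icc 0 T)) (hk : ContinuousOn k (Icc 0 T))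
    (hF0 : 0 ≤ F 0)
    (hg0 : ∀ t ∈ Icc 0 T, 0 ≤ g t) (hr0 : ∀ t ∈ Icc 0 T, 0 ≤ r t) (hk0 : ∀ t ∈ Icc 0 T, 0 ≤ k t)
    (hd : ∀ t ∈ Ioo 0 T, HasDerivAt F (F' t) t)
    (hle : ∀ t ∈ Ioo 0 T, F' t ≤ g t * F t + r t - k t) {t : ℝ} (ht : t ∈ Icc 0 T) :
    F t + ∫ s in (0 : ℝ)..t, k s
      ≤ Real.exp (∫ s in (0 : ℝ)..T, g s) * (F 0 + ∫ s in (0 : ℝ)..T, r s) := by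
  obtain ⟨cg, dg⟩ := primitive_facts hT hg
  obtain ⟨cr, dr⟩ := primitive_facts hT hr
  obtain ⟨ck, dk⟩ := primitive_facts hT hk
  have mono : ∀ f : ℝ → ℝ, ContinuousOn f (Icc 0 T) → (∀ t ∈ Icc 0 T, 0 ≤ f t) →
      ∀ t ∈ Icc 0 T, 0 ≤ ∫ s in (0 : ℝ)..t, f s := fun f _ hf0 t ht =>
    integral_nonneg ht.1 fun s hs => hf0 s ⟨hs.1, hs.2.trans ht.2⟩
  have mono' : ∀ f : ℝ → ℝ, ContinuousOn f (Icc 0 T) → (∀ t ∈ Icc 0 T, 0 ≤ f t) →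
      (∫ s in (0 : ℝ)..t, f s) ≤ ∫ s in (0 : ℝ)..T, f s := fun f hf hf0 => by
    refine integral_mono_interval le_rfl ht.1 ht.2 ?_ (hf.intervalIntegrable_of_Icc hT.le)
    exact (ae_restrict_mem measurableSet_Ioc).mono fun s hs => hf0 s (Ioc_subset_Icc_self hs)
  set G : ℝ → ℝ := fun t => ∫ s in (0 : ℝ)..t, g s with hG
  set R : ℝ → ℝ := fun t => ∫ s in (0 : ℝ)..t, r s with hR
  set Q : ℝ → ℝ := fun t => ∫ s in (0 : ℝ)..t, k s with hQ
  have anti : AntitoneOn (fun t => (F t + Q t) * Real.exp (-G t) - R t) (Icc 0 T) := by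
    refine antitoneOn_of_hasDerivWithinAt_nonpos (convex_Icc 0 T)
      (f' := fun t => (F' t + k t) * Real.exp (-G t)
        + (F t + Q t) * (Real.exp (-G t) * (-g t)) - r t) ?_ ?_ ?_
    · exact ((hF.add ck).mul (Real.continuous_exp.comp_continuousOn cg.neg)).sub cr
    · intro s hs
      rw [interior_Icc] at hs
      exact ((((hd s hs).add (dk s hs)).mul (dg s hs).neg.exp).sub (dr s hs)).hasDerivWithinAt
    · intro s hs
      rw [interior_Icc] at hs
      have hs' := Ioo_subset_Icc_self hs
      have h1 := hle s hs
      have h2 : 0 ≤ g s * Q s := mul_nonneg (hg0 s hs') (mono k hk hk0 s hs')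
      have h3 : Real.exp (-G s) ≤ 1 := Real.exp_le_one_iff.2 (by
        have := mono g hg hg0 s hs'; simp only [hG]; linarith)
      have h4 := hr0 s hs'
      have h5 := Real.exp_pos (-G s)
      have h6 : (F' s + k s - g s * F s - g s * Q s) * Real.exp (-G s)
          ≤ r s * Real.exp (-G s) := by
        gcongr; linarith
      nlinarith
  have h0 := anti (left_mem_Icc.2 hT.le) ht ht.1
  have e0 : G 0 = 0 ∧ R 0 = 0 ∧ Q 0 = 0 := by simp [hG, hR, hQ]
  simp only [e0.1, e0.2.1, e0.2.2, add_zero, neg_zero, Real.exp_zero, mul_one, sub_zero] at h0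
  have h1 : G t ≤ G T := mono' g hg hg0
  have h2 : R t ≤ R T := mono' r hr hr0
  have h3 : 0 ≤ R t := mono r hr hr0 t ht
  have e : Real.exp (-G t) * Real.exp (G t) = 1 := by rw [← Real.exp_add]; simp
  calc F t + Q t = ((F t + Q t) * Real.exp (-G t)) * Real.exp (G t) := by
        rw [mul_assoc, e, mul_one]
    _ ≤ (F 0 + R t) * Real.exp (G t) := by gcongr; linarith
    _ ≤ (F 0 + R T) * Real.exp (G T) := by gcongr; linarith
    _ = _ := mul_comm _ _

open MeasureTheory intervalIntegral in
/-- One-dimensional Poincaré–Morrey inequality `(v x - v z)² ≤ (b - a) ∫ₐᵇ (v')²`. -/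
theorem sq_sub_le_integral {a b : ℝ} (hab : a < b) {v v' : ℝ → ℝ}
    (hv : ∀ x ∈ Icc a b, HasDerivAt v (v' x) x) (hv' : ContinuousOn v' (Icc a b))
    {x z : ℝ} (hz : z ∈ Icc a b) (hx : x ∈ Icc a b) (hzx : z ≤ x) :
    (v x - v z) ^ 2 ≤ (b - a) * ∫ ξ in a..b, v' ξ ^ 2 := by
  have hL : 0 < b - a := sub_pos.2 hab
  have hsub : Icc z x ⊆ Icc a b := Icc_subset_Icc hz.1 hx.2
  have i1 : IntervalIntegrable v' volume z x := (hv'.mono hsub).intervalIntegrable_of_Icc hzx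
  have i2 : IntervalIntegrable (fun ξ => v' ξ ^ 2) volume z x :=
    ((hv'.mono hsub).pow 2).intervalIntegrable_of_Icc hzx
  have ftc : ∫ ξ in z..x, v' ξ = v x - v z :=
    integral_eq_sub_of_hasDerivAt (fun ξ hξ => hv ξ (hsub (by rwa [uIcc_of_le hzx] at hξ))) i1
  -- Expanding `0 ≤ ∫ (v' - c)²` with the mean slope `c` over the whole length `b - a` gives the
  -- Cauchy–Schwarz bound without dividing by `x - z`, which may vanish.
  set c := (v x - v z) / (b - a) with hc
  have h0 : 0 ≤ ∫ ξ in z..x, (v' ξ - c) ^ 2 := integral_nonneg hzx fun _ _ => sq_nonneg _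
  have h1 : ∫ ξ in z..x, (v' ξ - c) ^ 2
      = (∫ ξ in z..x, v' ξ ^ 2) - 2 * c * (v x - v z) + (x - z) * c ^ 2 := by
    have : (fun ξ => (v' ξ - c) ^ 2) = fun ξ => (v' ξ ^ 2 - 2 * c * v' ξ) + c ^ 2 := by
      ext; ring
    rw [this, integral_add (i2.sub (i1.const_mul _)) (by simp), integral_sub i2 (i1.const_mul _),
      intervalIntegral.integral_const_mul, ftc]
    simp
  have h2 : (∫ ξ in z..x, v' ξ ^ 2) ≤ ∫ ξ in a..b, v' ξ ^ 2 :=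
    integral_mono_interval hz.1 hzx hx.2 (Filter.Eventually.of_forall fun _ => sq_nonneg _)
      ((hv'.pow 2).intervalIntegrable_of_Icc hab.le)
  have h3 : (x - z) * c ^ 2 ≤ (b - a) * c ^ 2 := by
    gcongr
    · exact hx.2
    · exact hz.1
  have h4 : v x - v z = c * (b - a) := by rw [hc]; field_simp
  rw [h4] at h1 ⊢
  nlinarith

/-! ### Energy and curvature estimates -/

open MeasureTheory intervalIntegral in
/-- The integration by parts behind the energy law: at a fixed time,
`y1 = ∂ₓy`, `y2 = ∂ₓ²y`, `y3 = ∂ₓ³y`, `y1t = ∂ₜ∂ₓy`, and `p` is the total flux, so `∂ₓp = -∂ₜy`. -/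
theorem energy_slice_one {a b : ℝ} (hab : a < b) {y1 y2 y3 y1t yt p : ℝ → ℝ}
    (h1 : ∀ x ∈ Icc a b, HasDerivAt y1 (y2 x) x) (h2 : ∀ x ∈ Icc a b, HasDerivAt y2 (y3 x) x)
    (ht : ∀ x ∈ Icc a b, HasDerivAt yt (y1t x) x)
    (hp : ∀ x ∈ Icc a b, HasDerivAt p (-yt x) x)
    (c2 : ContinuousOn y2 (Icc a b)) (c3 : ContinuousOn y3 (Icc a b))
    (c1t : ContinuousOn y1t (Icc a b)) (ct : ContinuousOn yt (Icc a b))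
    (h1a : y1 a = 0) (h1b : y1 b = 0) (hpa : p a = 0) (hpb : p b = 0) :
    ∫ x in a..b, 2 * (y1 x * y1t x) = ∫ x in a..b, -(2 * (y3 x * p x)) := by
  have hu := uIcc_of_le hab.le
  have A := integral_mul_deriv_eq_deriv_mul (u := y1) (v := yt) (a := a) (b := b)
    (by rwa [hu]) (by rwa [hu]) (c2.intervalIntegrable_of_Icc hab.le)
    (c1t.intervalIntegrable_of_Icc hab.le)
  have B := integral_mul_deriv_eq_deriv_mul (u := y2) (v := p) (v' := fun x => -yt x) (a := a) (b := b)
    (by rwa [hu]) (by rwa [hu]) (c3.intervalIntegrable_of_Icc hab.le)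
    (ct.neg.intervalIntegrable_of_Icc hab.le)
  simp only [mul_neg, intervalIntegral.integral_neg, h1a, h1b, hpa, hpb] at A B
  simp only [intervalIntegral.integral_const_mul, intervalIntegral.integral_neg]
  linarith

open MeasureTheory intervalIntegral in
/-- The integration by parts behind the curvature estimate: at a fixed time,
`yk = ∂ₓᵏy` and `ykt = ∂ₜ∂ₓᵏy`. -/
theorem energy_slice_two {a b : ℝ} (hab : a < b) {y2 y3 y4 y2t y1t yt : ℝ → ℝ}
    (h2 : ∀ x ∈ Icc a b, HasDerivAt y2 (y3 x) x) (h3 : ∀ x ∈ Icc a b, HasDerivAt y3 (y4 x) x)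
    (ht : ∀ x ∈ Icc a b, HasDerivAt yt (y1t x) x)
    (h1t : ∀ x ∈ Icc a b, HasDerivAt y1t (y2t x) x)
    (c3 : ContinuousOn y3 (Icc a b)) (c4 : ContinuousOn y4 (Icc a b))
    (c1t : ContinuousOn y1t (Icc a b)) (c2t : ContinuousOn y2t (Icc a b))
    (h1a : y1t a = 0) (h1b : y1t b = 0) (h3a : y3 a = 0) (h3b : y3 b = 0) :
    ∫ x in a..b, 2 * (y2 x * y2t x) = ∫ x in a..b, 2 * (y4 x * yt x) := by
  have hu := uIcc_of_le hab.le
  have A := integral_mul_deriv_eq_deriv_mul (u := y2) (v := y1t) (a := a) (b := b)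
    (by rwa [hu]) (by rwa [hu]) (c3.intervalIntegrable_of_Icc hab.le)
    (c2t.intervalIntegrable_of_Icc hab.le)
  have B := integral_mul_deriv_eq_deriv_mul (u := y3) (v := yt) (a := a) (b := b)
    (by rwa [hu]) (by rwa [hu]) (c4.intervalIntegrable_of_Icc hab.le)
    (c1t.intervalIntegrable_of_Icc hab.le)
  simp only [h1a, h1b, h3a, h3b] at A B
  simp only [intervalIntegral.integral_const_mul]
  linarith

section Estimates

variable {a b T lam ε β C₀ : ℝ} {y yx yxx yxxx yxxxx yt u ux yxt yxxt : ℝ → ℝ → ℝ}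

theorem mobility_lower (hlam : 0 < lam) (hβ : 1 < β) (hC₀ : 0 < C₀) {z : ℝ} (hz : C₀ ≤ z) :
    lam * C₀ ^ β + ε ≤ lam * |z| ^ β + ε := by
  have : C₀ ^ β ≤ |z| ^ β := Real.rpow_le_rpow hC₀.le (hz.trans (le_abs_self z)) (by linarith)
  gcongr

/-- The equation in conservation form: the total flux `(λ|y|^β + ε) ∂ₓ³y - u` has spatial
derivative `-∂ₜy`. -/
theorem flux_hasDerivAt (hS : IsClassicalSolution a b T lam ε β y yx yxx yxxx yxxxx yt u ux)
    {t : ℝ} (ht : t ∈ Icc 0 T) {x : ℝ} (hx : x ∈ Icc a b) :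
    HasDerivAt (fun ξ => (lam * |y t ξ| ^ β + ε) * yxxx t ξ - u t ξ) (-yt t x) x := by
  have h := (hS.pde t ht x hx).sub (hS.hux t ht x hx)
  exact h.congr_deriv (by ring)

open MeasureTheory intervalIntegral in
/-- The mass `∫ₐᵇ y` does not grow (it is in fact conserved, the total flux vanishing at `a, b`). -/
theorem mass_le (hab : a < b) (hT : 0 < T) (hC₀ : 0 < C₀)
    (hS : IsClassicalSolution a b T lam ε β y yx yxx yxxx yxxxx yt u ux)
    (hlow : ∀ t ∈ Icc (0 : ℝ) T, ∀ x ∈ Icc a b, C₀ ≤ y t x) {t : ℝ} (ht : t ∈ Icc 0 T) :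
    ∫ x in a..b, y t x ≤ ∫ x in a..b, y 0 x := by
  have h := gronwall_integral hT (F := fun t => ∫ x in a..b, y t x)
    (F' := fun t => ∫ x in a..b, yt t x) (g := fun _ => 0) (r := fun _ => 0) (k := fun _ => 0)
    (continuousOn_integral_param hT hab hS.cont_y) continuousOn_const continuousOn_const
    continuousOn_const
    (integral_nonneg hab.le fun x hx => hC₀.le.trans (hlow 0 (left_mem_Icc.2 hT.le) x hx))
    (fun _ _ => le_rfl) (fun _ _ => le_rfl) (fun _ _ => le_rfl)
    (fun s hs => hasDerivAt_integral_param hab hS.cont_y hS.cont_yt hS.hyt hs) ?_ ht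
  · simpa using h
  · intro s hs
    have hs' := Ioo_subset_Icc_self hs
    have h1 := integral_eq_sub_of_hasDerivAt (a := a) (b := b)
      (f := fun ξ => (lam * |y s ξ| ^ β + ε) * yxxx s ξ - u s ξ) (f' := fun ξ => -yt s ξ)
      (fun x hx => flux_hasDerivAt hS hs' (by rwa [uIcc_of_le hab.le] at hx))
      ((continuousOn_slice hS.cont_yt hs').neg.intervalIntegrable_of_Icc hab.le)
    simp only [hS.bc_yxxx_a s hs', hS.bc_yxxx_b s hs', hS.bc_u_a s hs', hS.bc_u_b s hs',
      intervalIntegral.integral_neg] at h1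
    linarith

open MeasureTheory intervalIntegral in
/-- Energy estimate: `∂ₓy` is bounded in `L^∞(L²)` and `∂ₓ³y` in `L²(L²)`. Testing the equation
with `-∂ₓ²y` produces the dissipation `∫ (λ|y|^β + ε) (∂ₓ³y)²` and the work `∫ u ∂ₓ³y`, which
Young's inequality and the Poincaré inequality for `u` absorb. -/
theorem energy_estimate (hab : a < b) (hT : 0 < T) (hlam : 0 < lam) (hβ : 1 < β) (hC₀ : 0 < C₀)
    (hε : 0 ≤ ε) (hS : IsClassicalSolution a b T lam ε β y yx yxx yxxx yxxxx yt u ux)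
    (hyxt : ∀ t ∈ Icc (0 : ℝ) T, ∀ x ∈ Icc a b, HasDerivAt (fun s => yx s x) (yxt t x) t)
    (hcxt : ContinuousOn (fun p : ℝ × ℝ => yxt p.1 p.2) (Icc 0 T ×ˢ Icc a b))
    (hytx : ∀ t ∈ Icc (0 : ℝ) T, ∀ x ∈ Icc a b, HasDerivAt (fun ξ => yt t ξ) (yxt t x) x)
    (hlow : ∀ t ∈ Icc (0 : ℝ) T, ∀ x ∈ Icc a b, C₀ ≤ y t x) {t : ℝ} (ht : t ∈ Icc 0 T) :
    (∫ x in a..b, yx t x ^ 2)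
        + lam * C₀ ^ β * ∫ s in (0 : ℝ)..t, ∫ x in a..b, yxxx s x ^ 2
      ≤ (∫ x in a..b, yx 0 x ^ 2)
        + (b - a) ^ 2 / (lam * C₀ ^ β) * ∫ s in (0 : ℝ)..T, ∫ x in a..b, ux s x ^ 2 := by
  have hμ : 0 < lam * C₀ ^ β := by positivity
  set μ := lam * C₀ ^ β with hμd
  have hL : 0 < b - a := sub_pos.2 hab
  have hsq : ∀ (f : ℝ → ℝ → ℝ) (s : ℝ), 0 ≤ ∫ x in a..b, f s x ^ 2 := fun f s =>
    integral_nonneg hab.le fun _ _ => sq_nonneg _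
  have h := gronwall_integral hT (F := fun t => ∫ x in a..b, yx t x ^ 2)
    (F' := fun t => ∫ x in a..b, 2 * (yx t x * yxt t x)) (g := fun _ => 0)
    (r := fun s => (b - a) ^ 2 / μ * ∫ x in a..b, ux s x ^ 2)
    (k := fun s => μ * ∫ x in a..b, yxxx s x ^ 2)
    (continuousOn_integral_param hT hab (hS.cont_yx.pow 2)) continuousOn_const
    (continuousOn_const.mul (continuousOn_integral_param hT hab (hS.cont_ux.pow 2)))
    (continuousOn_const.mul (continuousOn_integral_param hT hab (hS.cont_yxxx.pow 2)))
    (hsq yx 0) (fun _ _ => le_rfl)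
    (fun s _ => mul_nonneg (by positivity) (hsq ux s))
    (fun s _ => mul_nonneg hμ.le (hsq yxxx s))
    (fun s hs => hasDerivAt_integral_param hab (f := fun t x => yx t x ^ 2)
      (ft := fun t x => 2 * (yx t x * yxt t x))
      (hS.cont_yx.pow 2) (continuousOn_const.mul (hS.cont_yx.mul hcxt)) ?_ hs) ?_ ht
  · simpa using h
  · intro s hs x hx
    exact ((hyxt s hs x hx).pow 2).congr_deriv (by simp; ring)
  · intro s hs
    have hs' := Ioo_subset_Icc_self hs
    have cs := fun {f : ℝ → ℝ → ℝ}
      (hf : ContinuousOn (fun p : ℝ × ℝ => f p.1 p.2) (Icc 0 T ×ˢ Icc a b)) =>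
      continuousOn_slice hf hs'
    have hp := fun x hx => flux_hasDerivAt hS hs' (x := x) hx
    have key := energy_slice_one hab (hS.hyxx s hs') (hS.hyxxx s hs') (hytx s hs') hp
      (cs hS.cont_yxx) (cs hS.cont_yxxx) (cs hcxt) (cs hS.cont_yt) (hS.bc_yx_a s hs')
      (hS.bc_yx_b s hs') (by simp [hS.bc_yxxx_a s hs', hS.bc_u_a s hs'])
      (by simp [hS.bc_yxxx_b s hs', hS.bc_u_b s hs'])
    simp only [zero_mul, zero_add]
    rw [key]
    set H := ∫ x in a..b, ux s x ^ 2 with hH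
    have cp : ContinuousOn (fun ξ => (lam * |y s ξ| ^ β + ε) * yxxx s ξ - u s ξ) (Icc a b) :=
      fun x hx => (hp x hx).continuousAt.continuousWithinAt
    have i3 : IntervalIntegrable (fun x => yxxx s x ^ 2) volume a b :=
      ((cs hS.cont_yxxx).pow 2).intervalIntegrable_of_Icc hab.le
    have hmono : ∫ x in a..b, -(2 * (yxxx s x * ((lam * |y s x| ^ β + ε) * yxxx s x - u s x)))
        ≤ ∫ x in a..b, ((b - a) * H / μ - μ * yxxx s x ^ 2) := by
      refine integral_mono_on hab.le ?_ ?_ fun x hx => ?_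
      · exact (continuousOn_const.mul ((cs hS.cont_yxxx).mul cp)).neg.intervalIntegrable_of_Icc
          hab.le
      · exact (by simp : IntervalIntegrable (fun _ : ℝ => (b - a) * H / μ) volume a b).sub
          (i3.const_mul _)
      · have hm := mobility_lower (ε := ε) hlam hβ hC₀ (hlow s hs' x hx)
        set m := lam * |y s x| ^ β + ε
        have hm' : μ ≤ m := by linarith
        have hu := sq_sub_le_integral hab (hS.hux s hs') (cs hS.cont_ux)
          (left_mem_Icc.2 hab.le) hx hx.1
        rw [hS.bc_u_a s hs', sub_zero] at hu
        -- Young's inequality for `2 u ∂ₓ³y`, as a completed square.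
        have h1 : 0 ≤ (μ * yxxx s x - u s x) ^ 2 / μ := by positivity
        have h2 : (μ * yxxx s x - u s x) ^ 2 / μ
            = μ * yxxx s x ^ 2 - 2 * yxxx s x * u s x + u s x ^ 2 / μ := by
          field_simp
          ring
        have h3 : u s x ^ 2 / μ ≤ (b - a) * H / μ := by gcongr
        have h4 : μ * yxxx s x ^ 2 ≤ m * yxxx s x ^ 2 := by gcongr
        linarith
    refine hmono.trans_eq ?_
    rw [integral_sub (by simp) (i3.const_mul _), intervalIntegral.integral_const,
      intervalIntegral.integral_const_mul, smul_eq_mul]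
    ring

open MeasureTheory intervalIntegral in
/-- Sup bound from the mean value and the oscillation. -/
theorem height_le (hab : a < b) {v v' : ℝ → ℝ} {m₀ A : ℝ}
    (hv : ∀ x ∈ Icc a b, HasDerivAt v (v' x) x) (hv' : ContinuousOn v' (Icc a b))
    (hm : ∫ x in a..b, v x ≤ m₀) (hA : ∫ x in a..b, v' x ^ 2 ≤ A) {x : ℝ} (hx : x ∈ Icc a b) :
    v x ≤ m₀ / (b - a) + √((b - a) * A) := by
  have hL : 0 < b - a := sub_pos.2 hab
  have cv : ContinuousOn v (Icc a b) := fun x hx => (hv x hx).continuousAt.continuousWithinAt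
  set R := √((b - a) * A)
  have hosc : ∀ z ∈ Icc a b, v x - R ≤ v z := by
    intro z hz
    have hle : (v x - v z) ^ 2 ≤ (b - a) * A := by
      refine le_trans ?_ (mul_le_mul_of_nonneg_left hA hL.le)
      rcases le_total z x with h | h
      · exact sq_sub_le_integral hab hv hv' hz hx h
      · rw [← neg_sq, neg_sub]
        exact sq_sub_le_integral hab hv hv' hx hz h
    have := Real.le_sqrt_of_sq_le hle
    linarith
  have h1 : ∫ _ in a..b, (v x - R) ≤ ∫ z in a..b, v z :=
    integral_mono_on hab.le (by simp) (cv.intervalIntegrable_of_Icc hab.le) hosc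
  rw [intervalIntegral.integral_const, smul_eq_mul] at h1
  have h2 : v x - R ≤ m₀ / (b - a) := by
    rw [le_div_iff₀ hL]; linarith
  linarith

/-- The equation with the product rule carried out; the derivative of `|y|^β` is that of `y^β`,
as `y > 0`. -/
theorem yt_eq (hC₀ : 0 < C₀)
    (hS : IsClassicalSolution a b T lam ε β y yx yxx yxxx yxxxx yt u ux)
    (hlow : ∀ t ∈ Icc (0 : ℝ) T, ∀ x ∈ Icc a b, C₀ ≤ y t x)
    {t : ℝ} (ht : t ∈ Icc 0 T) {x : ℝ} (hx : x ∈ Icc a b) :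
    yt t x = ux t x - (lam * |y t x| ^ β + ε) * yxxxx t x
      - lam * β * y t x ^ (β - 1) * yx t x * yxxx t x := by
  have hpos : 0 < y t x := hC₀.trans_le (hlow t ht x hx)
  have hy := hS.hyx t ht x hx
  have hm : HasDerivAt (fun ξ => lam * |y t ξ| ^ β + ε)
      (lam * (yx t x * β * y t x ^ (β - 1))) x := by
    refine HasDerivAt.congr_of_eventuallyEq
      (((hy.rpow_const (p := β) (Or.inl hpos.ne')).const_mul lam).add_const ε) ?_
    filter_upwards [hy.continuousAt.eventually (lt_mem_nhds hpos)] with ξ hξ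
    rw [abs_of_pos hξ]
  have h := (hS.pde t ht x hx).unique (hm.mul (hS.hyxxxx t ht x hx))
  linear_combination -h

theorem timeDeriv_zero {f : ℝ → ℝ} {f' t : ℝ} (ht : t ∈ Ioo 0 T) (h0 : ∀ s ∈ Icc 0 T, f s = 0)
    (hf : HasDerivAt f f' t) : f' = 0 := by
  refine hf.unique ((hasDerivAt_const t (0 : ℝ)).congr_of_eventuallyEq ?_)
  filter_upwards [Ioo_mem_nhds ht.1 ht.2] with s hs
  exact h0 s (Ioo_subset_Icc_self hs)

open MeasureTheory intervalIntegral in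
/-- Curvature estimate: given a height bound `y ≤ K`, testing the equation with `∂ₓ⁴y` and using
`(∂ₓy)² ≤ (b - a) ∫ₐᵇ (∂ₓ²y)²` leads to Grönwall's inequality for `∫ₐᵇ (∂ₓ²y)²`, whose rate is a
multiple of `∫ₐᵇ (∂ₓ³y)²`. -/
theorem curvature_estimate (hab : a < b) (hT : 0 < T) (hlam : 0 < lam) (hβ : 1 < β) (hC₀ : 0 < C₀)
    (hε : 0 ≤ ε) (hS : IsClassicalSolution a b T lam ε β y yx yxx yxxx yxxxx yt u ux)
    (hyxt : ∀ t ∈ Icc (0 : ℝ) T, ∀ x ∈ Icc a b, HasDerivAt (fun s => yx s x) (yxt t x) t)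
    (hcxt : ContinuousOn (fun p : ℝ × ℝ => yxt p.1 p.2) (Icc 0 T ×ˢ Icc a b))
    (hytx : ∀ t ∈ Icc (0 : ℝ) T, ∀ x ∈ Icc a b, HasDerivAt (fun ξ => yt t ξ) (yxt t x) x)
    (hyxxt : ∀ t ∈ Icc (0 : ℝ) T, ∀ x ∈ Icc a b, HasDerivAt (fun s => yxx s x) (yxxt t x) t)
    (hcxxt : ContinuousOn (fun p : ℝ × ℝ => yxxt p.1 p.2) (Icc 0 T ×ˢ Icc a b))
    (hyxtx : ∀ t ∈ Icc (0 : ℝ) T, ∀ x ∈ Icc a b, HasDerivAt (fun ξ => yxt t ξ) (yxxt t x) x)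
    (hlow : ∀ t ∈ Icc (0 : ℝ) T, ∀ x ∈ Icc a b, C₀ ≤ y t x) {K : ℝ}
    (hK : ∀ t ∈ Icc (0 : ℝ) T, ∀ x ∈ Icc a b, y t x ≤ K) {t : ℝ} (ht : t ∈ Icc 0 T) :
    (∫ x in a..b, yxx t x ^ 2)
        + (lam * C₀ ^ β + ε) * ∫ s in (0 : ℝ)..t, ∫ x in a..b, yxxxx s x ^ 2
      ≤ Real.exp (2 * (lam * β * K ^ (β - 1)) ^ 2 * (b - a) / (lam * C₀ ^ β)
            * ∫ s in (0 : ℝ)..T, ∫ x in a..b, yxxx s x ^ 2)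
        * ((∫ x in a..b, yxx 0 x ^ 2)
          + 2 / (lam * C₀ ^ β) * ∫ s in (0 : ℝ)..T, ∫ x in a..b, ux s x ^ 2) := by
  have hμ : 0 < lam * C₀ ^ β := by positivity
  set μ := lam * C₀ ^ β with hμd
  set N := lam * β * K ^ (β - 1) with hN
  have hL : 0 < b - a := sub_pos.2 hab
  have hsq : ∀ (f : ℝ → ℝ → ℝ) (s : ℝ), 0 ≤ ∫ x in a..b, f s x ^ 2 := fun f s =>
    integral_nonneg hab.le fun _ _ => sq_nonneg _
  have h := gronwall_integral hT (F := fun t => ∫ x in a..b, yxx t x ^ 2)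
    (F' := fun t => ∫ x in a..b, 2 * (yxx t x * yxxt t x))
    (g := fun s => 2 * N ^ 2 * (b - a) / μ * ∫ x in a..b, yxxx s x ^ 2)
    (r := fun s => 2 / μ * ∫ x in a..b, ux s x ^ 2)
    (k := fun s => (μ + ε) * ∫ x in a..b, yxxxx s x ^ 2)
    (continuousOn_integral_param hT hab (hS.cont_yxx.pow 2))
    (continuousOn_const.mul (continuousOn_integral_param hT hab (hS.cont_yxxx.pow 2)))
    (continuousOn_const.mul (continuousOn_integral_param hT hab (hS.cont_ux.pow 2)))
    (continuousOn_const.mul (continuousOn_integral_param hT hab (hS.cont_yxxxx.pow 2)))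
    (hsq yxx 0)
    (fun s _ => mul_nonneg (by positivity) (hsq yxxx s))
    (fun s _ => mul_nonneg (by positivity) (hsq ux s))
    (fun s _ => mul_nonneg (by positivity) (hsq yxxxx s))
    (fun s hs => hasDerivAt_integral_param hab (f := fun t x => yxx t x ^ 2)
      (ft := fun t x => 2 * (yxx t x * yxxt t x))
      (hS.cont_yxx.pow 2) (continuousOn_const.mul (hS.cont_yxx.mul hcxxt)) ?_ hs) ?_ ht
  · simpa only [intervalIntegral.integral_const_mul] using h
  · intro s hs x hx
    exact ((hyxxt s hs x hx).pow 2).congr_deriv (by simp; ring)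
  · intro s hs
    have hs' := Ioo_subset_Icc_self hs
    have cs := fun {f : ℝ → ℝ → ℝ}
      (hf : ContinuousOn (fun p : ℝ × ℝ => f p.1 p.2) (Icc 0 T ×ˢ Icc a b)) =>
      continuousOn_slice hf hs'
    have key := energy_slice_two hab (hS.hyxxx s hs') (hS.hyxxxx s hs') (hytx s hs')
      (hyxtx s hs') (cs hS.cont_yxxx) (cs hS.cont_yxxxx) (cs hcxt) (cs hcxxt)
      (timeDeriv_zero hs hS.bc_yx_a (hyxt s hs' a (left_mem_Icc.2 hab.le)))
      (timeDeriv_zero hs hS.bc_yx_b (hyxt s hs' b (right_mem_Icc.2 hab.le)))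
      (hS.bc_yxxx_a s hs') (hS.bc_yxxx_b s hs')
    rw [key]
    set F := ∫ x in a..b, yxx s x ^ 2 with hF
    have i3 : IntervalIntegrable (fun x => yxxx s x ^ 2) volume a b :=
      ((cs hS.cont_yxxx).pow 2).intervalIntegrable_of_Icc hab.le
    have i4 : IntervalIntegrable (fun x => yxxxx s x ^ 2) volume a b :=
      ((cs hS.cont_yxxxx).pow 2).intervalIntegrable_of_Icc hab.le
    have iu : IntervalIntegrable (fun x => ux s x ^ 2) volume a b :=
      ((cs hS.cont_ux).pow 2).intervalIntegrable_of_Icc hab.le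
    have hmono : ∫ x in a..b, 2 * (yxxxx s x * yt s x)
        ≤ ∫ x in a..b, ((2 * N ^ 2 * (b - a) / μ * F) * yxxx s x ^ 2 + 2 / μ * ux s x ^ 2
          - (μ + ε) * yxxxx s x ^ 2) := by
      refine integral_mono_on hab.le ?_ (((i3.const_mul _).add (iu.const_mul _)).sub
        (i4.const_mul _)) fun x hx => ?_
      · exact (continuousOn_const.mul
          ((cs hS.cont_yxxxx).mul (cs hS.cont_yt))).intervalIntegrable_of_Icc hab.le
      · have hm := mobility_lower (ε := ε) hlam hβ hC₀ (hlow s hs' x hx)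
        rw [yt_eq hC₀ hS hlow hs' hx]
        have hypos : 0 < y s x := hC₀.trans_le (hlow s hs' x hx)
        have hn : lam * β * y s x ^ (β - 1) ≤ N := by
          have hb : 0 < β := by linarith
          have := Real.rpow_le_rpow hypos.le (hK s hs' x hx) (by linarith : 0 ≤ β - 1)
          rw [hN]; gcongr
        have hn0 : 0 ≤ lam * β * y s x ^ (β - 1) := by
          have hb : 0 < β := by linarith
          positivity
        have hx2 := sq_sub_le_integral hab (hS.hyxx s hs') (cs hS.cont_yxx)
          (left_mem_Icc.2 hab.le) hx hx.1
        rw [hS.bc_yx_a s hs', sub_zero, ← hF] at hx2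
        set m := lam * |y s x| ^ β + ε
        set n := lam * β * y s x ^ (β - 1)
        set v4 := yxxxx s x
        set w := n * yx s x * yxxx s x with hw
        set U := ux s x
        have h4 : (μ + ε) * v4 ^ 2 ≤ m * v4 ^ 2 := by gcongr
        have h4' : 0 ≤ ε * v4 ^ 2 := by positivity
        have young : ∀ z : ℝ, 2 * v4 * z ≤ μ / 2 * v4 ^ 2 + 2 / μ * z ^ 2 := by
          intro z
          have h1 : 0 ≤ (μ * v4 - 2 * z) ^ 2 / (2 * μ) := by positivity
          have h2 : (μ * v4 - 2 * z) ^ 2 / (2 * μ)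
              = μ / 2 * v4 ^ 2 - 2 * v4 * z + 2 / μ * z ^ 2 := by
            field_simp
            ring
          linarith
        have hw2 : w ^ 2 ≤ N ^ 2 * ((b - a) * F) * yxxx s x ^ 2 := by
          rw [hw, mul_pow, mul_pow]; gcongr
        have hw3 : 2 / μ * w ^ 2 ≤ 2 / μ * (N ^ 2 * ((b - a) * F) * yxxx s x ^ 2) := by gcongr
        have e : 2 * N ^ 2 * (b - a) / μ * F * yxxx s x ^ 2
            = 2 / μ * (N ^ 2 * ((b - a) * F) * yxxx s x ^ 2) := by ring
        have y1 := young U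
        have y2 := young (-w)
        rw [neg_sq] at y2
        rw [e]
        linarith
    refine hmono.trans_eq ?_
    rw [integral_sub ((i3.const_mul _).add (iu.const_mul _)) (i4.const_mul _),
      integral_add (i3.const_mul _) (iu.const_mul _)]
    simp only [intervalIntegral.integral_const_mul]
    ring

end Estimates

/-- Lemma 2.4 (H⁴ a priori estimate): there is a constant `C > 0`, depending only
on the data, such that every classical solution (for any `ε ∈ [0,ε₀]`) with
continuous mixed derivatives `∂ₜ∂ₓy = ∂ₓ∂ₜy` and `∂ₜ∂ₓ²y = ∂ₓ∂ₜ∂ₓy`, lower bound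
`y ≥ C₀`, and the stated bounds on the initial data and the control, satisfies
`sup_t ‖∂ₓ²y(t)‖² + (λC₀^β + ε)·‖∂ₓ⁴y‖²_{L²(L²)} ≤ C·(‖∂ₓu‖²_{L²(L²)} + 1)`. -/
theorem thinFilm_h4_apriori_estimate
    (a b T lam β C₀ ε₀ E₀ D₀ m₀ M : ℝ) (hab : a < b) (hT : 0 < T) (hlam : 0 < lam)
    (hβ : 1 < β) (hC₀ : 0 < C₀) (hε₀ : 0 ≤ ε₀) (hE₀ : 0 ≤ E₀) (hD₀ : 0 ≤ D₀)
    (hm₀ : 0 ≤ m₀) (hM : 0 ≤ M) :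
    ∃ C : ℝ, 0 < C ∧
      ∀ ε ∈ Icc (0 : ℝ) ε₀,
      ∀ y yx yxx yxxx yxxxx yt u ux yxt yxxt : ℝ → ℝ → ℝ,
        IsClassicalSolution a b T lam ε β y yx yxx yxxx yxxxx yt u ux →
        (∀ t ∈ Icc (0 : ℝ) T, ∀ x ∈ Icc a b,
          HasDerivAt (fun s => yx s x) (yxt t x) t) →
        ContinuousOn (fun p : ℝ × ℝ => yxt p.1 p.2) (Icc 0 T ×ˢ Icc a b) →
        (∀ t ∈ Icc (0 : ℝ) T, ∀ x ∈ Icc a b,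
          HasDerivAt (fun ξ => yt t ξ) (yxt t x) x) →
        (∀ t ∈ Icc (0 : ℝ) T, ∀ x ∈ Icc a b,
          HasDerivAt (fun s => yxx s x) (yxxt t x) t) →
        ContinuousOn (fun p : ℝ × ℝ => yxxt p.1 p.2) (Icc 0 T ×ˢ Icc a b) →
        (∀ t ∈ Icc (0 : ℝ) T, ∀ x ∈ Icc a b,
          HasDerivAt (fun ξ => yxt t ξ) (yxxt t x) x) →
        (∀ t ∈ Icc (0 : ℝ) T, ∀ x ∈ Icc a b, C₀ ≤ y t x) →
        (1 / 2) * (∫ x in a..b, (yx 0 x) ^ 2) ≤ E₀ →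
        (∫ x in a..b, (yxx 0 x) ^ 2) ≤ D₀ ^ 2 →
        (∫ x in a..b, y 0 x) ≤ m₀ →
        (∫ s in (0 : ℝ)..T, ∫ x in a..b, (ux s x) ^ 2) ≤ M ^ 2 →
        ∀ t ∈ Icc (0 : ℝ) T,
          (∫ x in a..b, (yxx t x) ^ 2)
              + (lam * C₀ ^ β + ε) * (∫ s in (0 : ℝ)..T, ∫ x in a..b, (yxxxx s x) ^ 2)
            ≤ C * ((∫ s in (0 : ℝ)..T, ∫ x in a..b, (ux s x) ^ 2) + 1) := by
  have hL : 0 < b - a := sub_pos.2 hab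
  have hμ : 0 < lam * C₀ ^ β := by positivity
  set μ := lam * C₀ ^ β with hμd
  -- `A` bounds `∫ (∂ₓy)²`, `A / μ` bounds `∫∫ (∂ₓ³y)²`, and `K` bounds `y`; the factor
  -- `2` in the constant accounts for adding the curvature estimates at times `t` and `T`.
  set A := 2 * E₀ + (b - a) ^ 2 / μ * M ^ 2 with hA
  set K := m₀ / (b - a) + √((b - a) * A) with hKd
  set c := 2 * (lam * β * K ^ (β - 1)) ^ 2 * (b - a) / μ with hc
  have hc0 : 0 ≤ c := by positivity
  refine ⟨2 * Real.exp (c * (A / μ)) * (D₀ ^ 2 + 2 / μ), by positivity, ?_⟩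
  intro ε hε y yx yxx yxxx yxxxx yt u ux yxt yxxt hS hyxt hcxt hytx hyxxt hcxxt hyxtx hlow
    hE hD hm hM' t ht
  have hT0 : (0 : ℝ) ≤ T := hT.le
  have hsq : ∀ (f : ℝ → ℝ → ℝ) (s : ℝ), 0 ≤ ∫ x in a..b, f s x ^ 2 := fun f s =>
    intervalIntegral.integral_nonneg hab.le fun _ _ => sq_nonneg _
  have hsqt : ∀ (f : ℝ → ℝ → ℝ) (s : ℝ), 0 ≤ s → 0 ≤ ∫ r in (0 : ℝ)..s, ∫ x in a..b, f r x ^ 2 :=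
    fun f s hs => intervalIntegral.integral_nonneg hs fun _ _ => hsq f _
  have hen : ∀ s ∈ Icc 0 T, (∫ x in a..b, yx s x ^ 2)
      + μ * ∫ r in (0 : ℝ)..s, ∫ x in a..b, yxxx r x ^ 2 ≤ A := fun s hs => by
    refine (energy_estimate hab hT hlam hβ hC₀ hε.1 hS hyxt hcxt hytx hlow hs).trans ?_
    rw [hA, ← hμd]
    gcongr
    linarith
  have hK : ∀ s ∈ Icc (0 : ℝ) T, ∀ x ∈ Icc a b, y s x ≤ K := fun s hs x hx => by
    refine height_le hab (hS.hyx s hs) (continuousOn_slice hS.cont_yx hs)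
      ((mass_le hab hT hC₀ hS hlow hs).trans hm) ?_ hx
    have := hen s hs
    have := mul_nonneg hμ.le (hsqt yxxx s hs.1)
    linarith
  have hG : ∫ s in (0 : ℝ)..T, ∫ x in a..b, yxxx s x ^ 2 ≤ A / μ := by
    rw [le_div_iff₀ hμ]
    have := hen T (right_mem_Icc.2 hT0)
    have := hsq yx T
    linarith
  have hfin := fun s hs => curvature_estimate hab hT hlam hβ hC₀ hε.1 hS hyxt hcxt hytx hyxxt
    hcxxt hyxtx hlow hK (t := s) hs
  rw [← hμd, ← hc] at hfin
  have hH := hsqt ux T hT0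
  set H := ∫ s in (0 : ℝ)..T, ∫ x in a..b, ux s x ^ 2
  have hB : Real.exp (c * ∫ s in (0 : ℝ)..T, ∫ x in a..b, yxxx s x ^ 2)
      * ((∫ x in a..b, yxx 0 x ^ 2) + 2 / μ * H)
      ≤ Real.exp (c * (A / μ)) * ((D₀ ^ 2 + 2 / μ) * (H + 1)) := by
    have : D₀ ^ 2 + 2 / μ * H ≤ (D₀ ^ 2 + 2 / μ) * (H + 1) := by
      have h1 : 0 ≤ D₀ ^ 2 * H := by positivity
      have h2 : 0 < 2 / μ := by positivity
      linarith
    have h0 := hsq yxx 0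
    gcongr
    linarith
  have h1 := (hfin t ht).trans hB
  have h2 := (hfin T (right_mem_Icc.2 hT0)).trans hB
  have h3 := hsq yxx T
  have hμε : 0 ≤ μ + ε := add_nonneg hμ.le hε.1
  have h4 := mul_nonneg hμε (hsqt yxxxx t ht.1)
  linarith
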